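/- Let λ, c, t > 0 and let ξ ∈ ℝ with c|ξ| ≠ λ. Then e^{−λt}·cos(ctξ) + ∫_{−ct}^{ct} e^{iξx}·μ(x,t) dx equals e^{−λt}·[ cosh(t√(λ²−ξ²c²)) + λ·sinh(t√(λ²−ξ²c²))/√(λ²−ξ²c²) ] when |ξ| < λ/c, and equals e^{−λt}·[ cos(t√(ξ²c²−λ²)) + λ·sin(t√(ξ²c²−λ²))/√(ξ²c²−λ²) ] when |ξ| > λ/c; in particular the left-hand side, which is ∫_ℝ e^{iξx} dp_t(x), is the characteristic function of the telegraph law. -/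

import Mathlib

/-!
The characteristic function of the telegraph law, by termwise integration.

Inside the light cone `|x| < c t` the density is `λ e^{-λt} / 2` times a power series
`∑ bₖ (c² t² - x²)ᵏ` with nonnegative coefficients (`telegraphDensity_eq_series`), so only the
cosine part of the exponential survives integration over `[-ct, ct]`. Expanding `cos (ξ x)` too and
integrating the double series by dominated convergence reduces everything to the Beta integrals
`∫ x^{2m} (a² - x²)^k` (`integral_even_pow_mul`, `hasSum_integral_cos_mul_series`). Collecting the
terms with `m + k = n`, the binomial theorem (`sum_antidiagonal_telegraph`) turns the `I₀` part into
the series of `λ sinh (t ω) / ω` and the `I₁` part into that of `cosh (t ω) - cos (c t ξ)`, where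
`ω² = λ² - ξ² c²`. The atoms cancel `cos (c t ξ)`. Both series involve `ω²` only, so the cases
`ω² > 0` and `ω² < 0` follow from one identity (`telegraph_transform`) by recognising hyperbolic or
circular functions.
-/

open MeasureTheory Real

/-- Modified Bessel function of the first kind of order 0. -/
noncomputable def besselI0 (y : ℝ) : ℝ :=
  ∑' k : ℕ, (y / 2) ^ (2 * k) / ((Nat.factorial k : ℝ) ^ 2)

/-- Modified Bessel function of the first kind of order 1. -/
noncomputable def besselI1 (y : ℝ) : ℝ :=
  ∑' j : ℕ, (y / 2) ^ (2 * j + 1) / ((Nat.factorial j : ℝ) * (Nat.factorial (j + 1) : ℝ))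

/-- The density `μ(x,t)` of the absolutely continuous part of the telegraph law. -/
noncomputable def telegraphDensity (lam c x t : ℝ) : ℝ :=
  lam * Real.exp (-lam * t) / 2 *
    ((1 / c) * besselI0 (lam / c * Real.sqrt (c ^ 2 * t ^ 2 - x ^ 2)) +
      t * besselI1 (lam / c * Real.sqrt (c ^ 2 * t ^ 2 - x ^ 2)) /
        Real.sqrt (c ^ 2 * t ^ 2 - x ^ 2))

/-- The law of the telegraph process:
`p_t = (e^{−λt}/2)(δ_{−ct} + δ_{ct}) + μ(·,t)·1_{(−ct,ct)}·Leb`. -/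
noncomputable def telegraphLaw (lam c t : ℝ) : MeasureTheory.Measure ℝ :=
  ENNReal.ofReal (Real.exp (-lam * t) / 2) •
      (MeasureTheory.Measure.dirac (-(c * t)) + MeasureTheory.Measure.dirac (c * t)) +
    MeasureTheory.volume.withDensity fun x =>
      ENNReal.ofReal
        (Set.indicator (Set.Ioo (-(c * t)) (c * t)) (fun y => telegraphDensity lam c y t) x)

/-! ### Termwise integration of power series in `a² - x²` -/

/-- Even moments of `(a² - x²)^k` over `[-a, a]`, that is, `a^(2(m+k)+1)` times the Beta value
`B(m + 1/2, k + 1)`, written with factorials. -/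
lemma integral_even_pow_mul (a : ℝ) (k : ℕ) : ∀ m : ℕ,
    ∫ x in (-a)..a, x ^ (2 * m) * (a ^ 2 - x ^ 2) ^ k =
      2 * a ^ (2 * (m + k) + 1) * ((2 * m).factorial * k.factorial * 4 ^ k * (m + k).factorial) /
        (m.factorial * (2 * (m + k) + 1).factorial) := by
  induction k with
  | zero =>
    intro m
    have h1 : ((m.factorial : ℕ) : ℝ) ≠ 0 := by positivity
    have h2 : (((2 * m).factorial : ℕ) : ℝ) ≠ 0 := by positivity
    have h3 : (2 * (m : ℝ) + 1) ≠ 0 := by positivity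
    simp only [pow_zero, mul_one, integral_pow, add_zero, Nat.factorial_succ, Nat.factorial_zero]
    rw [Odd.neg_pow ⟨m, rfl⟩]
    push_cast
    field_simp
    ring
  | succ k ih =>
    intro m
    -- `(a² - x²)^(k+1) = a² (a² - x²)^k - x² (a² - x²)^k`
    have h : ∀ x : ℝ, x ^ (2 * m) * (a ^ 2 - x ^ 2) ^ (k + 1) =
        a ^ 2 * (x ^ (2 * m) * (a ^ 2 - x ^ 2) ^ k) -
          x ^ (2 * (m + 1)) * (a ^ 2 - x ^ 2) ^ k := fun x => by ring
    simp only [h]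
    rw [intervalIntegral.integral_sub (Continuous.intervalIntegrable (by fun_prop) _ _)
      (Continuous.intervalIntegrable (by fun_prop) _ _), intervalIntegral.integral_const_mul,
      ih, ih]
    have e1 : m + 1 + k = m + k + 1 := by ring
    have e2 : m + (k + 1) = m + k + 1 := by ring
    have e3 : 2 * (m + k + 1) + 1 = 2 * (m + k) + 1 + 1 + 1 := by ring
    have e4 : 2 * (m + 1) = 2 * m + 1 + 1 := by ring
    rw [e1, e2, e3, e4]
    simp only [Nat.factorial_succ (2 * (m + k) + 1 + 1), Nat.factorial_succ (2 * (m + k) + 1),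
      Nat.factorial_succ (2 * m + 1), Nat.factorial_succ (2 * m), Nat.factorial_succ m,
      Nat.factorial_succ k, Nat.factorial_succ (m + k)]
    have h1 : ((m.factorial : ℕ) : ℝ) ≠ 0 := by positivity
    have h2 : (((2 * (m + k) + 1).factorial : ℕ) : ℝ) ≠ 0 := by positivity
    push_cast
    field_simp
    ring

/-- Cosine transform over `[-a, a]` of a power series in `a² - x²` with nonnegative coefficients:
both series are integrated termwise and the terms of total degree `n` are collected. -/
lemma hasSum_integral_cos_mul_series (a ξ : ℝ) (ha : 0 ≤ a) (b : ℕ → ℝ) (hb : ∀ k, 0 ≤ b k)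
    (hs : Summable fun k => b k * (a ^ 2) ^ k) :
    HasSum (fun n => ∑ p ∈ Finset.HasAntidiagonal.antidiagonal n,
        (-1) ^ p.1 * ξ ^ (2 * p.1) / (2 * p.1).factorial * b p.2 *
          (2 * a ^ (2 * (p.1 + p.2) + 1) *
            ((2 * p.1).factorial * p.2.factorial * 4 ^ p.2 * (p.1 + p.2).factorial) /
            (p.1.factorial * (2 * (p.1 + p.2) + 1).factorial)))
      (∫ x in (-a)..a, Real.cos (ξ * x) * ∑' k, b k * (a ^ 2 - x ^ 2) ^ k) := by
  have hcosh : Summable fun m : ℕ => (|ξ| * a) ^ (2 * m) / ((2 * m).factorial : ℝ) :=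
    (Real.hasSum_cosh _).summable
  -- The double series is dominated on `[-a, a]` by constants, the product of the `cosh (|ξ| a)`
  -- series and the given one.
  have hbd : Summable fun p : ℕ × ℕ =>
      (|ξ| * a) ^ (2 * p.1) / ((2 * p.1).factorial : ℝ) * (b p.2 * (a ^ 2) ^ p.2) :=
    hcosh.mul_of_nonneg hs (fun m => by positivity) (fun k => mul_nonneg (hb k) (by positivity))
  have hx : ∀ x ∈ Set.uIoc (-a) a, |x| ≤ a ∧ 0 ≤ a ^ 2 - x ^ 2 := by
    intro x hx
    rw [Set.uIoc_of_le (by linarith)] at hx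
    have h : |x| ≤ a := abs_le.2 ⟨hx.1.le, hx.2⟩
    exact ⟨h, sub_nonneg.2 (sq_le_sq.2 (by rwa [abs_of_nonneg ha]))⟩
  have key : HasSum (fun p : ℕ × ℕ => ∫ x in (-a)..a,
      ((-1) ^ p.1 * (ξ * x) ^ (2 * p.1) / (2 * p.1).factorial) * (b p.2 * (a ^ 2 - x ^ 2) ^ p.2))
      (∫ x in (-a)..a, Real.cos (ξ * x) * ∑' k, b k * (a ^ 2 - x ^ 2) ^ k) := by
    have hn : ∀ (p : ℕ × ℕ) (x : ℝ), x ∈ Set.uIoc (-a) a →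
        ‖((-1) ^ p.1 * (ξ * x) ^ (2 * p.1) / (2 * p.1).factorial) *
          (b p.2 * (a ^ 2 - x ^ 2) ^ p.2)‖ ≤
        (|ξ| * a) ^ (2 * p.1) / ((2 * p.1).factorial : ℝ) * (b p.2 * (a ^ 2) ^ p.2) := by
      intro p x h
      obtain ⟨h1, h2⟩ := hx x h
      have h3 := hb p.2
      rw [norm_mul, norm_mul, norm_div, norm_mul, norm_pow, norm_pow, norm_pow, norm_neg, norm_one,
        one_pow, one_mul, norm_mul, Real.norm_of_nonneg h2, Real.norm_of_nonneg h3,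
        Real.norm_natCast, Real.norm_eq_abs, Real.norm_eq_abs]
      gcongr
      nlinarith [sq_nonneg x]
    have hpt : ∀ x ∈ Set.uIoc (-a) a, HasSum (fun p : ℕ × ℕ =>
        ((-1) ^ p.1 * (ξ * x) ^ (2 * p.1) / (2 * p.1).factorial) *
          (b p.2 * (a ^ 2 - x ^ 2) ^ p.2))
        (Real.cos (ξ * x) * ∑' k, b k * (a ^ 2 - x ^ 2) ^ k) := by
      intro x h
      obtain ⟨h1, h2⟩ := hx x h
      have hs' : Summable fun k => b k * (a ^ 2 - x ^ 2) ^ k := by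
        refine Summable.of_nonneg_of_le (fun k => mul_nonneg (hb k) (by positivity))
          (fun k => ?_) hs
        have := hb k
        gcongr
        nlinarith [sq_nonneg x]
      have hsum : Summable fun p : ℕ × ℕ =>
          ((-1) ^ p.1 * (ξ * x) ^ (2 * p.1) / (2 * p.1).factorial) *
            (b p.2 * (a ^ 2 - x ^ 2) ^ p.2) :=
        Summable.of_norm_bounded hbd fun p => hn p x h
      exact (Real.hasSum_cos (ξ * x)).mul hs'.hasSum hsum
    exact intervalIntegral.hasSum_integral_of_dominated_convergence
      (fun p _ => (|ξ| * a) ^ (2 * p.1) / ((2 * p.1).factorial : ℝ) * (b p.2 * (a ^ 2) ^ p.2))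
      (fun p => Continuous.aestronglyMeasurable (by fun_prop))
      (fun p => Filter.Eventually.of_forall fun x => hn p x)
      (Filter.Eventually.of_forall fun x _ => hbd) intervalIntegrable_const
      (Filter.Eventually.of_forall hpt)
  have key2 := (Finset.HasAntidiagonal.sigmaAntidiagonalEquivProd (A := ℕ)).hasSum_iff.2 key
  have key3 := key2.sigma (fun n => hasSum_fintype _)
  convert key3 using 2 with n
  rw [Finset.univ_eq_attach]
  refine (Finset.sum_attach _ _).symm.trans (Finset.sum_congr rfl fun p _ => ?_)
  have h : ∀ x : ℝ, ((-1) ^ p.1.1 * (ξ * x) ^ (2 * p.1.1) / (2 * p.1.1).factorial) *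
      (b p.1.2 * (a ^ 2 - x ^ 2) ^ p.1.2) =
      ((-1) ^ p.1.1 * ξ ^ (2 * p.1.1) / (2 * p.1.1).factorial * b p.1.2) *
        (x ^ (2 * p.1.1) * (a ^ 2 - x ^ 2) ^ p.1.2) := fun x => by rw [mul_pow]; ring
  simp only [Function.comp, Finset.HasAntidiagonal.sigmaAntidiagonalEquivProd_apply, h]
  rw [intervalIntegral.integral_const_mul, integral_even_pow_mul]

/-! ### The density as a power series -/

/-- Coefficients of the telegraph density as a power series in `c² t² - x²`, without the prefactor
`λ e^{-λt} / 2`: the contribution of `I₀` plus that of `I₁`. -/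
noncomputable def telegraphCoeff (lam c t : ℝ) (k : ℕ) : ℝ :=
  (1 / c) * ((lam / c / 2) ^ (2 * k) / (k.factorial : ℝ) ^ 2) +
    t * ((lam / c / 2) ^ (2 * k + 1) / ((k.factorial : ℝ) * ((k + 1).factorial : ℝ)))

lemma telegraphCoeff_nonneg {lam c t : ℝ} (hlam : 0 < lam) (hc : 0 < c) (ht : 0 < t) (k : ℕ) :
    0 ≤ telegraphCoeff lam c t k := by
  unfold telegraphCoeff; positivity

lemma summable_I0_coeff (v D : ℝ) :
    Summable fun k : ℕ => v ^ (2 * k) / (k.factorial : ℝ) ^ 2 * D ^ k := by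
  refine Summable.of_norm_bounded (Real.summable_pow_div_factorial (v ^ 2 * |D|)) fun k => ?_
  have h1 : (1 : ℝ) ≤ k.factorial := by exact_mod_cast k.factorial_pos
  rw [norm_mul, norm_div, norm_pow, norm_pow, norm_pow, Real.norm_natCast, Real.norm_eq_abs,
    Real.norm_eq_abs, pow_mul, sq_abs, mul_pow, div_mul_eq_mul_div]
  gcongr
  nlinarith

lemma summable_I1_coeff (v D : ℝ) :
    Summable fun k : ℕ =>
      v ^ (2 * k + 1) / ((k.factorial : ℝ) * ((k + 1).factorial : ℝ)) * D ^ k := by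
  refine Summable.of_norm_bounded
    ((Real.summable_pow_div_factorial (v ^ 2 * |D|)).mul_left |v|) fun k => ?_
  have h1 : (1 : ℝ) ≤ (k + 1).factorial := by exact_mod_cast (k + 1).factorial_pos
  have h2 : (0 : ℝ) < k.factorial := by exact_mod_cast k.factorial_pos
  rw [norm_mul, norm_div, norm_pow, norm_pow, norm_mul, Real.norm_natCast, Real.norm_natCast,
    Real.norm_eq_abs, Real.norm_eq_abs, pow_succ, pow_mul, sq_abs, mul_pow, div_mul_eq_mul_div,
    mul_div_assoc', show (v ^ 2) ^ k * |v| * |D| ^ k = |v| * ((v ^ 2) ^ k * |D| ^ k) by ring]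
  gcongr
  nlinarith

lemma summable_telegraphCoeff (lam c t D : ℝ) :
    Summable fun k => telegraphCoeff lam c t k * D ^ k := by
  refine (((summable_I0_coeff (lam / c / 2) D).mul_left (1 / c)).add
    ((summable_I1_coeff (lam / c / 2) D).mul_left t)).congr fun k => ?_
  unfold telegraphCoeff
  ring

/-- Inside the light cone the density is a power series in `c² t² - x²`. The value at `x = ± c t`
has to be left out, because there the quotient `I₁(0) / 0` is `0` instead of its limit. -/
lemma telegraphDensity_eq_series (lam c t x : ℝ) (hx : 0 < c ^ 2 * t ^ 2 - x ^ 2) :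
    telegraphDensity lam c x t = lam * Real.exp (-lam * t) / 2 *
      ∑' k, telegraphCoeff lam c t k * ((c * t) ^ 2 - x ^ 2) ^ k := by
  have hD : (c * t) ^ 2 - x ^ 2 = c ^ 2 * t ^ 2 - x ^ 2 := by ring
  rw [hD]
  set D := c ^ 2 * t ^ 2 - x ^ 2 with hDdef
  have hs : 0 < Real.sqrt D := Real.sqrt_pos.2 hx
  have hs2 : Real.sqrt D ^ 2 = D := Real.sq_sqrt hx.le
  have h0 : besselI0 (lam / c * Real.sqrt D) =
      ∑' k : ℕ, (lam / c / 2) ^ (2 * k) / (k.factorial : ℝ) ^ 2 * D ^ k := by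
    unfold besselI0
    refine tsum_congr fun k => ?_
    rw [show lam / c * Real.sqrt D / 2 = lam / c / 2 * Real.sqrt D by ring, mul_pow,
      pow_mul (Real.sqrt D), hs2]
    ring
  have h1 : besselI1 (lam / c * Real.sqrt D) / Real.sqrt D =
      ∑' k : ℕ, (lam / c / 2) ^ (2 * k + 1) /
        ((k.factorial : ℝ) * ((k + 1).factorial : ℝ)) * D ^ k := by
    unfold besselI1
    rw [← tsum_div_const]
    refine tsum_congr fun k => ?_
    rw [show lam / c * Real.sqrt D / 2 = lam / c / 2 * Real.sqrt D by ring, mul_pow,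
      pow_succ (Real.sqrt D), pow_mul (Real.sqrt D), hs2]
    field_simp
  have h2 : ∑' k, telegraphCoeff lam c t k * D ^ k =
      1 / c * besselI0 (lam / c * Real.sqrt D) +
        t * (besselI1 (lam / c * Real.sqrt D) / Real.sqrt D) := by
    rw [h0, h1, ← tsum_mul_left, ← tsum_mul_left, ← Summable.tsum_add
      ((summable_I0_coeff _ D).mul_left _) ((summable_I1_coeff _ D).mul_left _)]
    refine tsum_congr fun k => ?_
    unfold telegraphCoeff
    ring
  unfold telegraphDensity
  rw [h2, mul_div_assoc t]

lemma continuousOn_telegraph_series {lam c t : ℝ} (hlam : 0 < lam) (hc : 0 < c) (ht : 0 < t) :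
    ContinuousOn (fun x => lam * Real.exp (-lam * t) / 2 *
      ∑' k, telegraphCoeff lam c t k * ((c * t) ^ 2 - x ^ 2) ^ k)
      (Set.Icc (-(c * t)) (c * t)) := by
  refine continuousOn_const.mul (continuousOn_tsum (fun k => by fun_prop)
    (summable_telegraphCoeff lam c t ((c * t) ^ 2)) fun k x hx => ?_)
  have h1 := telegraphCoeff_nonneg hlam hc ht k
  have h2 : 0 ≤ (c * t) ^ 2 - x ^ 2 :=
    sub_nonneg.2 (sq_le_sq.2 (by rw [abs_of_pos (by positivity : 0 < c * t)]; exact abs_le.2 hx))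
  rw [norm_mul, norm_pow, Real.norm_of_nonneg h1, Real.norm_of_nonneg h2]
  gcongr
  nlinarith [sq_nonneg x]

lemma sub_pos_of_mem_Ioo {c t x : ℝ} (hx : x ∈ Set.Ioo (-(c * t)) (c * t)) :
    0 < c ^ 2 * t ^ 2 - x ^ 2 := by
  nlinarith [hx.1, hx.2]

lemma telegraphDensity_nonneg {lam c t x : ℝ} (hlam : 0 < lam) (hc : 0 < c) (ht : 0 < t)
    (hx : x ∈ Set.Ioo (-(c * t)) (c * t)) : 0 ≤ telegraphDensity lam c x t := by
  have h := sub_pos_of_mem_Ioo hx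
  rw [telegraphDensity_eq_series _ _ _ _ h]
  refine mul_nonneg (by positivity) (tsum_nonneg fun k =>
    mul_nonneg (telegraphCoeff_nonneg hlam hc ht k) (pow_nonneg ?_ k))
  nlinarith

lemma integrableOn_telegraphDensity {lam c t : ℝ} (hlam : 0 < lam) (hc : 0 < c) (ht : 0 < t) :
    IntegrableOn (fun x => telegraphDensity lam c x t) (Set.Ioo (-(c * t)) (c * t)) := by
  refine (((continuousOn_telegraph_series hlam hc ht).integrableOn_compact
    isCompact_Icc).mono_set Set.Ioo_subset_Icc_self).congr_fun (fun x hx => ?_) measurableSet_Ioo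
  exact (telegraphDensity_eq_series _ _ _ _ (sub_pos_of_mem_Ioo hx)).symm

lemma norm_exp_I_mul (ξ x : ℝ) : ‖Complex.exp (Complex.I * ξ * x)‖ = 1 := by
  rw [show Complex.I * ξ * x = ((ξ * x : ℝ) : ℂ) * Complex.I by push_cast; ring,
    Complex.norm_exp_ofReal_mul_I]

/-! ### Resummation by the binomial theorem -/

/-- The degree-`n` part of the integrated series is, by the binomial theorem, the sum of the
`n`-th term of `λ sinh (tω) / ω` and the term of index `n + 1` of `cosh (tω) - cos (ctξ)`, where
`ω² = λ² - ξ² c²`. -/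
lemma sum_antidiagonal_telegraph (lam c t ξ : ℝ) (hc : c ≠ 0) (n : ℕ) :
    lam / 2 * ∑ p ∈ Finset.HasAntidiagonal.antidiagonal n,
        (-1) ^ p.1 * ξ ^ (2 * p.1) / (2 * p.1).factorial * telegraphCoeff lam c t p.2 *
          (2 * (c * t) ^ (2 * (p.1 + p.2) + 1) *
            ((2 * p.1).factorial * p.2.factorial * 4 ^ p.2 * (p.1 + p.2).factorial) /
            (p.1.factorial * (2 * (p.1 + p.2) + 1).factorial)) =
      lam * (t ^ (2 * n + 1) * (lam ^ 2 - ξ ^ 2 * c ^ 2) ^ n / (2 * n + 1).factorial) +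
        (t ^ (2 * (n + 1)) * (lam ^ 2 - ξ ^ 2 * c ^ 2) ^ (n + 1) / (2 * (n + 1)).factorial -
          (-1) ^ (n + 1) * (c * t * ξ) ^ (2 * (n + 1)) / (2 * (n + 1)).factorial) := by
  have hw : lam ^ 2 - ξ ^ 2 * c ^ 2 = -(c ^ 2 * ξ ^ 2) + lam ^ 2 := by ring
  have hz : (-1 : ℝ) ^ (n + 1) * (c * t * ξ) ^ (2 * (n + 1)) =
      t ^ (2 * (n + 1)) * (-(c ^ 2 * ξ ^ 2)) ^ (n + 1) := by
    rw [neg_pow (c ^ 2 * ξ ^ 2)]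
    ring
  rw [hz, hw, (Commute.all (-(c ^ 2 * ξ ^ 2)) (lam ^ 2)).add_pow',
    (Commute.all (-(c ^ 2 * ξ ^ 2)) (lam ^ 2)).add_pow', Finset.Nat.sum_antidiagonal_succ',
    ← sub_div, ← mul_sub]
  simp only [Nat.choose_self, pow_zero, mul_one, one_smul, add_sub_cancel_left]
  rw [Finset.mul_sum, Finset.mul_sum, Finset.mul_sum, Finset.sum_div, Finset.sum_div,
    Finset.mul_sum, ← Finset.sum_add_distrib]
  refine Finset.sum_congr rfl fun p hp => ?_
  obtain ⟨m, k⟩ := p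
  obtain rfl : m + k = n := by simpa using hp
  have hch1 : (((m + k).choose m : ℕ) : ℝ) = (m + k).factorial / (m.factorial * k.factorial) := by
    rw [Nat.cast_choose ℝ (Nat.le_add_right m k), Nat.add_sub_cancel_left]
  have hch2 : (((m + k + 1).choose m : ℕ) : ℝ) =
      (m + k + 1).factorial / (m.factorial * (k + 1).factorial) := by
    rw [Nat.cast_choose ℝ (by omega), show m + k + 1 - m = k + 1 by omega]
  simp only [nsmul_eq_mul, hch1, hch2, telegraphCoeff]
  have h1 : ((m.factorial : ℕ) : ℝ) ≠ 0 := by positivity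
  have h2 : ((k.factorial : ℕ) : ℝ) ≠ 0 := by positivity
  have h3 : (((2 * m).factorial : ℕ) : ℝ) ≠ 0 := by positivity
  have h4 : (((2 * (m + k) + 1).factorial : ℕ) : ℝ) ≠ 0 := by positivity
  have h5 : (((m + k).factorial : ℕ) : ℝ) ≠ 0 := by positivity
  rw [show 2 * (m + k + 1) = 2 * (m + k) + 1 + 1 by ring, Nat.factorial_succ (2 * (m + k) + 1),
    Nat.factorial_succ (m + k), Nat.factorial_succ k, neg_pow (c ^ 2 * ξ ^ 2),
    show (4 : ℝ) ^ k = 2 ^ (2 * k) by rw [pow_mul]; norm_num]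
  push_cast
  simp only [div_pow, mul_pow]
  have h6 : (2 * ((m : ℝ) + k) + 1 + 1) ≠ 0 := by positivity
  field_simp
  ring

/-! ### Integrals against the telegraph law -/

/-- Integration against the telegraph law splits into the two atoms, which together give
`e^{-λt} cos (ctξ)`, and the absolutely continuous part. -/
lemma integral_telegraphLaw {lam c t : ℝ} (hlam : 0 < lam) (hc : 0 < c) (ht : 0 < t) (ξ : ℝ) :
    ∫ x, Complex.exp (Complex.I * ξ * x) ∂(telegraphLaw lam c t)
        = ((Real.exp (-lam * t) * Real.cos (c * t * ξ) : ℝ) : ℂ) +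
            ∫ x in (-(c * t))..(c * t),
              Complex.exp (Complex.I * ξ * x) * ((telegraphDensity lam c x t : ℝ) : ℂ) := by
  set e : ℝ → ℂ := fun x => Complex.exp (Complex.I * ξ * x) with he
  have hcont : Continuous e := by rw [he]; fun_prop
  set g : ℝ → ℝ := (Set.Ioo (-(c * t)) (c * t)).indicator (fun y => telegraphDensity lam c y t)
    with hg
  have hg0 : ∀ x, 0 ≤ g x :=
    Set.indicator_nonneg fun x hx => telegraphDensity_nonneg hlam hc ht hx
  have hgi : Integrable g :=
    (integrableOn_telegraphDensity hlam hc ht).integrable_indicator measurableSet_Ioo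
  have hfin : IsFiniteMeasure (volume.withDensity fun x => ENNReal.ofReal (g x)) :=
    isFiniteMeasure_withDensity_ofReal hgi.2
  have hexp_int : ∀ ν : Measure ℝ, IsFiniteMeasure ν → Integrable e ν := fun ν _ =>
    Integrable.of_bound hcont.aestronglyMeasurable 1
      (Filter.Eventually.of_forall fun x => (norm_exp_I_mul ξ x).le)
  have hatoms : Real.exp (-lam * t) / 2 * (e (-(c * t)) + e (c * t)) =
      ((Real.exp (-lam * t) * Real.cos (c * t * ξ) : ℝ) : ℂ) := by
    rw [Complex.ofReal_mul, Complex.ofReal_cos, Complex.cos, he]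
    simp only
    rw [show Complex.I * ξ * ((-(c * t) : ℝ) : ℂ) = -((c * t * ξ : ℝ) : ℂ) * Complex.I by
        push_cast; ring,
      show Complex.I * ξ * ((c * t : ℝ) : ℂ) = ((c * t * ξ : ℝ) : ℂ) * Complex.I by
        push_cast; ring]
    ring
  unfold telegraphLaw
  rw [integral_add_measure ((hexp_int _ inferInstance).smul_measure ENNReal.ofReal_ne_top)
      (hexp_int _ hfin), integral_smul_measure,
    integral_add_measure (hexp_int _ inferInstance) (hexp_int _ inferInstance), integral_dirac,
    integral_dirac, ENNReal.toReal_ofReal (by positivity), ← hatoms, Complex.real_smul,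
    integral_withDensity_eq_integral_toReal_smul₀ hgi.aestronglyMeasurable.aemeasurable.ennreal_ofReal
      (Filter.Eventually.of_forall fun x => ENNReal.ofReal_lt_top),
    intervalIntegral.integral_of_le (by nlinarith [mul_pos hc ht]),
    MeasureTheory.integral_Ioc_eq_integral_Ioo, ← integral_indicator measurableSet_Ioo]
  push_cast
  congr 1
  refine integral_congr_ae (Filter.Eventually.of_forall fun x => ?_)
  simp only [ENNReal.toReal_ofReal (hg0 x)]
  by_cases hx : x ∈ Set.Ioo (-(c * t)) (c * t)
  · simp [hg, he, Set.indicator_of_mem hx, mul_comm]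
  · simp [hg, Set.indicator_of_notMem hx]

/-- Against an even weight only the cosine part of the exponential contributes. -/
lemma integral_exp_mul_even (a ξ : ℝ) (ha : 0 ≤ a) (g : ℝ → ℝ) (hg : ContinuousOn g (Set.Icc (-a) a))
    (heven : ∀ x, g (-x) = g x) :
    ∫ x in (-a)..a, Complex.exp (Complex.I * ξ * x) * (g x : ℂ) =
      ((∫ x in (-a)..a, Real.cos (ξ * x) * g x : ℝ) : ℂ) := by
  have hgu : ContinuousOn g (Set.uIcc (-a) a) := by rwa [Set.uIcc_of_le (by linarith)]
  have hodd : ∫ x in (-a)..a, Real.sin (ξ * x) * g x = 0 := by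
    have h := intervalIntegral.integral_comp_neg (a := -a) (b := a)
      (fun x => Real.sin (ξ * x) * g x)
    simp only [heven, mul_neg, Real.sin_neg, neg_mul, neg_neg,
      intervalIntegral.integral_neg] at h
    linarith
  have hsplit : ∀ x : ℝ, Complex.exp (Complex.I * ξ * x) * (g x : ℂ) =
      ((Real.cos (ξ * x) * g x : ℝ) : ℂ) + Complex.I * ((Real.sin (ξ * x) * g x : ℝ) : ℂ) := by
    intro x
    rw [show Complex.I * ξ * x = ((ξ * x : ℝ) : ℂ) * Complex.I by push_cast; ring,
      Complex.exp_mul_I]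
    push_cast
    ring
  simp only [hsplit]
  rw [intervalIntegral.integral_add, intervalIntegral.integral_const_mul,
    intervalIntegral.integral_ofReal, intervalIntegral.integral_ofReal, hodd]
  · simp
  · apply ContinuousOn.intervalIntegrable
    exact Complex.continuous_ofReal.comp_continuousOn
      ((Continuous.continuousOn (by fun_prop)).mul hgu)
  · apply ContinuousOn.intervalIntegrable
    exact continuousOn_const.mul (Complex.continuous_ofReal.comp_continuousOn
      ((Continuous.continuousOn (by fun_prop)).mul hgu))

/-- The transform in terms of the entire functions `w ↦ cosh (t √w)` and `w ↦ sinh (t √w) / √w`,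
given by their power series at `w = λ² - ξ² c²`; both signs of `w` are covered. -/
lemma telegraph_transform {lam c t : ℝ} (hlam : 0 < lam) (hc : 0 < c) (ht : 0 < t) (ξ : ℝ)
    {C S : ℝ}
    (hC : HasSum (fun n : ℕ => t ^ (2 * n) * (lam ^ 2 - ξ ^ 2 * c ^ 2) ^ n / (2 * n).factorial) C)
    (hS : HasSum (fun n : ℕ =>
      t ^ (2 * n + 1) * (lam ^ 2 - ξ ^ 2 * c ^ 2) ^ n / (2 * n + 1).factorial) S) :
    ((Real.exp (-lam * t) * Real.cos (c * t * ξ) : ℝ) : ℂ) +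
        (∫ x in (-(c * t))..(c * t),
          Complex.exp (Complex.I * ξ * x) * ((telegraphDensity lam c x t : ℝ) : ℂ))
      = ((Real.exp (-lam * t) * (C + lam * S) : ℝ) : ℂ) := by
  have ha : 0 < c * t := mul_pos hc ht
  have hae : ∫ x in (-(c * t))..(c * t),
        Complex.exp (Complex.I * ξ * x) * ((telegraphDensity lam c x t : ℝ) : ℂ) =
      ∫ x in (-(c * t))..(c * t), Complex.exp (Complex.I * ξ * x) *
        ((lam * Real.exp (-lam * t) / 2 *
          ∑' k, telegraphCoeff lam c t k * ((c * t) ^ 2 - x ^ 2) ^ k : ℝ) : ℂ) := by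
    rw [intervalIntegral.integral_of_le (by linarith), intervalIntegral.integral_of_le (by linarith),
      MeasureTheory.integral_Ioc_eq_integral_Ioo, MeasureTheory.integral_Ioc_eq_integral_Ioo]
    refine setIntegral_congr_fun measurableSet_Ioo fun x hx => ?_
    simp only [telegraphDensity_eq_series _ _ _ _ (sub_pos_of_mem_Ioo hx)]
  rw [hae, integral_exp_mul_even (c * t) ξ ha.le _ (continuousOn_telegraph_series hlam hc ht)
    (fun x => by simp only [neg_sq])]
  set J := ∫ x in (-(c * t))..(c * t), Real.cos (ξ * x) *
    ∑' k, telegraphCoeff lam c t k * ((c * t) ^ 2 - x ^ 2) ^ k with hJ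
  have hpull : ∫ x in (-(c * t))..(c * t), Real.cos (ξ * x) * (lam * Real.exp (-lam * t) / 2 *
      ∑' k, telegraphCoeff lam c t k * ((c * t) ^ 2 - x ^ 2) ^ k) =
      Real.exp (-lam * t) * (lam / 2 * J) := by
    rw [hJ, ← mul_assoc, ← intervalIntegral.integral_const_mul]
    refine intervalIntegral.integral_congr fun x _ => ?_
    ring
  have h1 := (hasSum_integral_cos_mul_series (c * t) ξ ha.le (telegraphCoeff lam c t)
    (telegraphCoeff_nonneg hlam hc ht) (summable_telegraphCoeff lam c t _)).mul_left (lam / 2)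
  simp only [sum_antidiagonal_telegraph lam c t ξ hc.ne'] at h1
  -- Dropping the zeroth terms, both equal to `1`, leaves the difference of the two sums unchanged.
  have hC1 := (hasSum_nat_add_iff' 1).2 hC
  have hcos1 := (hasSum_nat_add_iff' 1).2 (Real.hasSum_cos (c * t * ξ))
  have h2 := h1.unique ((hS.mul_left lam).add (hC1.sub hcos1))
  simp only [Finset.sum_range_one, mul_zero, pow_zero, mul_one, Nat.factorial_zero, Nat.cast_one,
    div_one] at h2
  rw [hpull, ← Complex.ofReal_add, h2]
  congr 1
  ring

/-- The characteristic function of the telegraph law. -/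
theorem telegraph_law_characteristic_function
    (lam c t : ℝ) (hlam : 0 < lam) (hc : 0 < c) (ht : 0 < t)
    (ξ : ℝ) (hξ : c * |ξ| ≠ lam) :
    (∫ x, Complex.exp (Complex.I * ξ * x) ∂(telegraphLaw lam c t)
        = ((Real.exp (-lam * t) * Real.cos (c * t * ξ) : ℝ) : ℂ) +
            ∫ x in (-(c * t))..(c * t),
              Complex.exp (Complex.I * ξ * x) * ((telegraphDensity lam c x t : ℝ) : ℂ))
    ∧
    (|ξ| < lam / c →
      ((Real.exp (-lam * t) * Real.cos (c * t * ξ) : ℝ) : ℂ) +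
          (∫ x in (-(c * t))..(c * t),
            Complex.exp (Complex.I * ξ * x) * ((telegraphDensity lam c x t : ℝ) : ℂ))
        = ((Real.exp (-lam * t) *
            (Real.cosh (t * Real.sqrt (lam ^ 2 - ξ ^ 2 * c ^ 2)) +
              lam * Real.sinh (t * Real.sqrt (lam ^ 2 - ξ ^ 2 * c ^ 2)) /
                Real.sqrt (lam ^ 2 - ξ ^ 2 * c ^ 2)) : ℝ) : ℂ))
    ∧
    (|ξ| > lam / c →
      ((Real.exp (-lam * t) * Real.cos (c * t * ξ) : ℝ) : ℂ) +
          (∫ x in (-(c * t))..(c * t),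
            Complex.exp (Complex.I * ξ * x) * ((telegraphDensity lam c x t : ℝ) : ℂ))
        = ((Real.exp (-lam * t) *
            (Real.cos (t * Real.sqrt (ξ ^ 2 * c ^ 2 - lam ^ 2)) +
              lam * Real.sin (t * Real.sqrt (ξ ^ 2 * c ^ 2 - lam ^ 2)) /
                Real.sqrt (ξ ^ 2 * c ^ 2 - lam ^ 2)) : ℝ) : ℂ)) := by
  refine ⟨integral_telegraphLaw hlam hc ht ξ, fun h => ?_, fun h => ?_⟩
  · have hw : 0 < lam ^ 2 - ξ ^ 2 * c ^ 2 := by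
      rw [lt_div_iff₀ hc] at h
      rw [← sq_abs ξ]
      nlinarith [mul_nonneg (abs_nonneg ξ) hc.le]
    have hs : 0 < Real.sqrt (lam ^ 2 - ξ ^ 2 * c ^ 2) := Real.sqrt_pos.2 hw
    have hs2 := Real.sq_sqrt hw.le
    set s := Real.sqrt (lam ^ 2 - ξ ^ 2 * c ^ 2)
    rw [mul_div_assoc lam]
    refine telegraph_transform hlam hc ht ξ ?_ ?_
    · refine (Real.hasSum_cosh (t * s)).congr_fun fun n => ?_
      rw [← hs2]
      ring
    · refine ((Real.hasSum_sinh (t * s)).div_const s).congr_fun fun n => ?_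
      rw [← hs2]
      field_simp
      ring
  · have hw : 0 < ξ ^ 2 * c ^ 2 - lam ^ 2 := by
      rw [gt_iff_lt, div_lt_iff₀ hc] at h
      rw [← sq_abs ξ]
      nlinarith [mul_nonneg (abs_nonneg ξ) hc.le]
    have hs : 0 < Real.sqrt (ξ ^ 2 * c ^ 2 - lam ^ 2) := Real.sqrt_pos.2 hw
    have hs2 := Real.sq_sqrt hw.le
    set s := Real.sqrt (ξ ^ 2 * c ^ 2 - lam ^ 2)
    have hs3 : lam ^ 2 - ξ ^ 2 * c ^ 2 = -s ^ 2 := by rw [hs2]; ring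
    rw [mul_div_assoc lam]
    refine telegraph_transform hlam hc ht ξ ?_ ?_
    · refine (Real.hasSum_cos (t * s)).congr_fun fun n => ?_
      rw [hs3, neg_pow]
      ring
    · refine ((Real.hasSum_sin (t * s)).div_const s).congr_fun fun n => ?_
      rw [hs3, neg_pow]
      field_simp
      ring
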